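/- Let G be a group generated by a finite set S and let 𝓗 = {H_1,…,H_l} be a finite collection of stable subgroups of G. For each D ≥ 0 there exists R ≥ 0 such that: if 𝒞 is any collection of left cosets of subgroups in 𝓗 with the property that any two cosets in 𝒞 are at d_S-distance at most D from each other, then there exists x ∈ G such that the closed ball of radius R around x meets every coset in 𝒞. -/

import Mathlib

open Pointwise

section BasicDefs

variable {G : Type*} [Group G]

/-- The word length of `g` with respect to the generating set `S`
(words use letters from `S ∪ S⁻¹`). -/
noncomputable def wordLength (S : Set G) (g : G) : ℕ :=
  sInf {n : ℕ | ∃ l : List G, l.length = n ∧ (∀ x ∈ l, x ∈ S ∨ x⁻¹ ∈ S) ∧ l.prod = g}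

/-- The word metric on `G` with respect to the generating set `S`. -/
noncomputable def wordDist (S : Set G) (g h : G) : ℝ :=
  (wordLength S (g⁻¹ * h) : ℝ)

/-- The closed `r`-neighborhood of a subset `A` with respect to the word metric `d_S`. -/
def nbhd (S : Set G) (r : ℝ) (A : Set G) : Set G :=
  {g : G | ∃ a ∈ A, wordDist S g a ≤ r}

/-- The distance between two subsets: the infimum of distances between their elements. -/
noncomputable def setDist (S : Set G) (A B : Set G) : ℝ :=
  sInf {r : ℝ | ∃ a ∈ A, ∃ b ∈ B, r = wordDist S a b}

/-- The conjugate subgroup `H^g = g H g⁻¹`. -/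
def conjSub (g : G) (H : Subgroup G) : Subgroup G :=
  H.map (MulAut.conj g).toMonoidHom

end BasicDefs

/-- `γ` restricted to `{0, …, n}` is a `(K, ε)`-quasigeodesic for the distance function `d`. -/
def IsQuasigeodesic {α : Type*} (d : α → α → ℝ) (K ε : ℝ) (n : ℕ) (γ : ℕ → α) : Prop :=
  ∀ i j : ℕ, i ≤ n → j ≤ n →
    (1 / K) * |(i : ℝ) - (j : ℝ)| - ε ≤ d (γ i) (γ j) ∧
      d (γ i) (γ j) ≤ K * |(i : ℝ) - (j : ℝ)| + ε

/-- `γ` restricted to `{0, …, n}` is a geodesic for the distance function `d`. -/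
def IsGeodesic {α : Type*} (d : α → α → ℝ) (n : ℕ) (γ : ℕ → α) : Prop :=
  ∀ i j : ℕ, i ≤ n → j ≤ n → d (γ i) (γ j) = |(i : ℝ) - (j : ℝ)|

/-- The path `γ` (on `{0, …, n}`) is `f`-stable: every `(K, ε)`-quasigeodesic with endpoints
on `γ` stays in the `f K ε`-neighborhood of `γ`. -/
def IsStablePath {α : Type*} (d : α → α → ℝ) (f : ℝ → ℝ → ℝ) (n : ℕ) (γ : ℕ → α) : Prop :=
  ∀ K ε : ℝ, 1 ≤ K → 0 ≤ ε → ∀ (m : ℕ) (η : ℕ → α),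
    IsQuasigeodesic d K ε m η →
    (∃ i ≤ n, η 0 = γ i) → (∃ i ≤ n, η m = γ i) →
    ∀ j ≤ m, ∃ i ≤ n, d (η j) (γ i) ≤ f K ε

/-- The Gromov product `⟨x, y⟩_w` with respect to a distance function `d`. -/
noncomputable def gromovProd {α : Type*} (d : α → α → ℝ) (w x y : α) : ℝ :=
  (d w x + d w y - d x y) / 2

/-- Gromov hyperbolicity of a distance function, via the four-point condition. -/
def IsHyperbolicDist {α : Type*} (d : α → α → ℝ) : Prop :=
  ∃ δ : ℝ, 0 ≤ δ ∧ ∀ w x y z : α,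
    min (gromovProd d w x y) (gromovProd d w y z) - δ ≤ gromovProd d w x z

section GroupDefs

variable {G : Type*} [Group G]

/-- `H` is a stable subgroup of `(G, d_S)` with stability function `f`: `H` has a finite
generating set `T` such that the inclusion `(H, d_T) → (G, d_S)` is a quasi-isometric
embedding sending every `d_T`-geodesic to an `f`-stable quasigeodesic of `(G, d_S)`. -/
def IsStableSubgroupWith (S : Set G) (H : Subgroup G) (f : ℝ → ℝ → ℝ) : Prop :=
  ∃ T : Set H, T.Finite ∧ Subgroup.closure T = ⊤ ∧
    (∃ μ c : ℝ, 1 ≤ μ ∧ 0 ≤ c ∧ ∀ h₁ h₂ : H,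
      (1 / μ) * wordDist T h₁ h₂ - c ≤ wordDist S (h₁ : G) (h₂ : G) ∧
        wordDist S (h₁ : G) (h₂ : G) ≤ μ * wordDist T h₁ h₂ + c) ∧
    ∀ (n : ℕ) (γ : ℕ → H), IsGeodesic (wordDist T) n γ →
      (∃ K ε : ℝ, 1 ≤ K ∧ 0 ≤ ε ∧
        IsQuasigeodesic (wordDist S) K ε n (fun i => (γ i : G))) ∧
      IsStablePath (wordDist S) f n (fun i => (γ i : G))

/-- `H` is a stable subgroup of `(G, d_S)`. -/
def IsStableSubgroup (S : Set G) (H : Subgroup G) : Prop :=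
  ∃ f : ℝ → ℝ → ℝ, IsStableSubgroupWith S H f

/-- The family `Q` of subgroups is hyperbolically embedded in `(G, X)`:
(Q1) geometric separation, (Q2) finite generation, (Q3) uniform quasi-isometric embedding. -/
def IsHypEmbFamily {G : Type*} [Group G] {ι : Type*} (X : Set G) (Q : ι → Subgroup G) : Prop :=
  (∀ ε : ℝ, 0 < ε → ∃ R : ℝ, ∀ (g : G) (i j : ι),
      (∃ a ∈ (Q i : Set G) ∩ nbhd X ε (g • (Q j : Set G)),
        ∃ b ∈ (Q i : Set G) ∩ nbhd X ε (g • (Q j : Set G)), R ≤ wordDist X a b) →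
      i = j ∧ g ∈ Q i) ∧
  ∃ Y : ι → Set G, (∀ i, (Y i).Finite ∧ Y i ⊆ (Q i : Set G) ∧ Subgroup.closure (Y i) = Q i) ∧
    ∃ μ c : ℝ, 1 ≤ μ ∧ 0 ≤ c ∧ ∀ i : ι, ∀ h ∈ Q i,
      (wordLength (Y i) h : ℝ) ≤ μ * (wordLength X h : ℝ) + c

/-- The subset `H` of `G` satisfies the WPD condition in `(G, X)`. -/
def WPDSet (X : Set G) (H : Set G) : Prop :=
  ∀ ε : ℝ, 0 < ε → ∃ N : ℝ, 0 < N ∧ ∀ h₁ h₂ : G, h₁ ∈ H → h₂ ∈ H →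
    N < wordDist X h₁ h₂ →
    {g : G | wordDist X h₁ (g * h₁) < ε ∧ wordDist X h₂ (g * h₂) < ε}.Finite

/-- A quasimorphism on `G`. -/
def IsQuasimorphism (q : G → ℝ) : Prop :=
  ∃ D : ℝ, 0 ≤ D ∧ ∀ x y : G, |q (x * y) - q x - q y| ≤ D

/-- A homogeneous quasimorphism on `G`. -/
def IsHomogeneousQM (q : G → ℝ) : Prop :=
  IsQuasimorphism q ∧ ∀ (x : G) (n : ℕ), q (x ^ n) = (n : ℝ) * q x

/-- `H` is a quasiconvex subgroup of `(G, d_S)`: every geodesic with endpoints in `H`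
lies in a uniformly bounded neighborhood of `H`. -/
def IsQuasiconvex (S : Set G) (H : Subgroup G) : Prop :=
  ∃ C : ℝ, 0 ≤ C ∧ ∀ (n : ℕ) (γ : ℕ → G), IsGeodesic (wordDist S) n γ →
    γ 0 ∈ H → γ n ∈ H → ∀ i ≤ n, ∃ h ∈ H, wordDist S (γ i) h ≤ C

end GroupDefs

/-!
Call a subset of a metric space stable if its points are joined inside it by uniformly stable
quasigeodesics; cosets of stable subgroups are of this kind, with uniform constants. If `q` is a
nearest point of a stable set `A` to `x`, then a geodesic from `x` to `q` followed by a stable path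
in `A` is again a quasigeodesic. This has two consequences.

* For pairwise close stable sets `A`, `B`, `Y`, the projection to `Y` of a point at which `A` and
  `B` are close is close to both `A` and `B`.
* If `w, z ∈ Y` and `z` is close to `A`, then the projection of `w` to `A` is close to the stable
  path from `w` to `z` in `Y`.

For a finite collection `𝒞` fix `w ∈ Y ∈ 𝒞` and choose `A ∈ 𝒞` whose projection `p` of `w` is
farthest from `w`. Given `B ∈ 𝒞`, let `z ∈ Y` be close to `A` and to `B`. The projections of `w` to
`A` and to `B` are both close to the stable path from `w` to `z`, and the one to `A` essentially
comes later. As the projection to `B` and `z` are both close to `B`, so is `p`: it is a center.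

Only a bounded number of cosets of finitely many subgroups can meet a ball of given radius, so the
bound for finite subcollections forces any `𝒞` to be finite.
-/

section Paths

variable {α : Type*} {d : α → α → ℝ} {K K' ε ε' : ℝ} {m n : ℕ} {γ η : ℕ → α}
  {f f' : ℝ → ℝ → ℝ}

lemma isGeodesic_iff_isQuasigeodesic : IsGeodesic d n γ ↔ IsQuasigeodesic d 1 0 n γ := by
  simp [IsGeodesic, IsQuasigeodesic, le_antisymm_iff, and_comm]

lemma IsQuasigeodesic.mono (hγ : IsQuasigeodesic d K ε n γ) (hK : 0 < K)
    (hKK' : K ≤ K') (hεε' : ε ≤ ε') : IsQuasigeodesic d K' ε' n γ := by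
  intro i j hi hj
  obtain ⟨hlower, hupper⟩ := hγ i j hi hj
  have hinv : 1 / K' * |(i : ℝ) - j| ≤ 1 / K * |(i : ℝ) - j| := by gcongr
  have hmul : K * |(i : ℝ) - j| ≤ K' * |(i : ℝ) - j| := by gcongr
  constructor <;> linarith

lemma IsQuasigeodesic.comp_add_left (hγ : IsQuasigeodesic d K ε (m + n) γ) :
    IsQuasigeodesic d K ε n (fun i => γ (m + i)) := by
  intro i j hi hj
  simpa using hγ (m + i) (m + j) (by omega) (by omega)

/-- The path that follows `γ` up to time `m` and `η` from then on. -/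
def concatPath (m : ℕ) (γ η : ℕ → α) (i : ℕ) : α :=
  if i ≤ m then γ i else η (i - m)

lemma concatPath_of_le {i : ℕ} (hi : i ≤ m) : concatPath m γ η i = γ i :=
  if_pos hi

lemma concatPath_add (h : γ m = η 0) (i : ℕ) : concatPath m γ η (m + i) = η i := by
  rcases i.eq_zero_or_pos with rfl | hi
  · rw [add_zero, concatPath_of_le le_rfl, h]
  · rw [concatPath, if_neg (by omega), Nat.add_sub_cancel_left]

lemma IsStablePath.mono (hγ : IsStablePath d f n γ) (hff' : f ≤ f') :
    IsStablePath d f' n γ := by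
  intro K ε hK hε m η hη h0 hm j hj
  obtain ⟨i, hi, hji⟩ := hγ K ε hK hε m η hη h0 hm j hj
  exact ⟨i, hi, hji.trans (hff' K ε)⟩

/-- If `f` is a stability function, then `relaxedStability f r` bounds the distance to a path from
quasigeodesics whose endpoints are merely `r`-close to it. -/
def relaxedStability (f : ℝ → ℝ → ℝ) (r K ε : ℝ) : ℝ :=
  f K (ε + 2 * r) + r

end Paths

section MetricPaths

variable {α : Type*} [PseudoMetricSpace α] {K ε r : ℝ} {m n : ℕ} {γ η σ : ℕ → α}
  {f : ℝ → ℝ → ℝ}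

lemma isQuasigeodesic_dist_iff :
    IsQuasigeodesic dist K ε n γ ↔ ∀ i j : ℕ, i ≤ j → j ≤ n →
      (1 / K) * ((j : ℝ) - i) - ε ≤ dist (γ i) (γ j) ∧
        dist (γ i) (γ j) ≤ K * ((j : ℝ) - i) + ε := by
  have abs_sub_of_le (i j : ℕ) (hij : i ≤ j) : |(i : ℝ) - j| = j - i := by
    rw [abs_sub_comm, abs_of_nonneg (sub_nonneg.2 (Nat.cast_le.2 hij))]
  refine ⟨fun h i j hij hj => abs_sub_of_le i j hij ▸ h i j (hij.trans hj) hj,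
    fun h i j hi hj => ?_⟩
  rcases le_total i j with hij | hji
  · rw [abs_sub_of_le i j hij]
    exact h i j hij hj
  · rw [dist_comm, abs_sub_comm, abs_sub_of_le j i hji]
    exact h j i hji hi

lemma isGeodesic_dist_iff :
    IsGeodesic dist n γ ↔ ∀ i j : ℕ, i ≤ j → j ≤ n → dist (γ i) (γ j) = (j : ℝ) - i := by
  rw [isGeodesic_iff_isQuasigeodesic, isQuasigeodesic_dist_iff]
  simp [le_antisymm_iff, and_comm]

lemma isGeodesic_of_dist_succ_le (hstep : ∀ i < n, dist (γ i) (γ (i + 1)) ≤ 1)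
    (hend : (n : ℝ) ≤ dist (γ 0) (γ n)) : IsGeodesic dist n γ := by
  have upper (i j : ℕ) (hij : i ≤ j) (hj : j ≤ n) : dist (γ i) (γ j) ≤ (j : ℝ) - i := by
    have h := dist_le_Ico_sum_of_dist_le hij (f := γ) (d := fun _ => 1)
      fun _ hk => hstep _ (by omega)
    simpa [Nat.cast_sub hij] using h
  refine isGeodesic_dist_iff.2 fun i j hij hj => le_antisymm (upper i j hij hj) ?_
  have hi := upper 0 i i.zero_le (hij.trans hj)
  have hjn := upper j n hj le_rfl
  have htri := dist_triangle4 (γ 0) (γ i) (γ j) (γ n)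
  push_cast at hi
  linarith

lemma IsQuasigeodesic.nonneg (hγ : IsQuasigeodesic dist K ε n γ) : 0 ≤ ε := by
  simpa using (hγ 0 0 n.zero_le n.zero_le).2

lemma IsQuasigeodesic.of_dist_le (hη : IsQuasigeodesic dist K ε m η)
    (hclose : ∀ i ≤ m, dist (η i) (γ i) ≤ r) : IsQuasigeodesic dist K (ε + 2 * r) m γ := by
  intro i j hi hj
  obtain ⟨hlower, hupper⟩ := hη i j hi hj
  have hri := hclose i hi
  have hrj := hclose j hj
  have hγη := dist_triangle4 (γ i) (η i) (η j) (γ j)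
  have hηγ := dist_triangle4 (η i) (γ i) (γ j) (η j)
  rw [dist_comm (γ i) (η i)] at hγη
  rw [dist_comm (γ j) (η j)] at hηγ
  constructor <;> linarith

theorem IsQuasigeodesic.concatPath {L : ℝ} (hK : 1 ≤ K) (hL : 1 ≤ L)
    (hγ : IsQuasigeodesic dist K ε m γ) (hη : IsQuasigeodesic dist K ε n η) (h : γ m = η 0)
    (hcorner : ∀ i ≤ m, ∀ j ≤ n,
      dist (γ i) (η 0) + dist (η 0) (η j) ≤ L * dist (γ i) (η j)) :
    IsQuasigeodesic dist (K * L) (2 * ε) (m + n) (concatPath m γ η) := by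
  have hε := hγ.nonneg
  have hKL : K ≤ K * L := le_mul_of_one_le_right (by linarith) hL
  have hγ' := isQuasigeodesic_dist_iff.1 (hγ.mono (by linarith) hKL (ε' := 2 * ε) (by linarith))
  have hη' := isQuasigeodesic_dist_iff.1 (hη.mono (by linarith) hKL (ε' := 2 * ε) (by linarith))
  refine isQuasigeodesic_dist_iff.2 fun i j hij hj => ?_
  rcases le_total j m with hjm | hmj
  · rw [concatPath_of_le hjm, concatPath_of_le (hij.trans hjm)]
    exact hγ' i j hij hjm
  obtain ⟨j, rfl⟩ := Nat.exists_eq_add_of_le hmj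
  rw [concatPath_add h]
  rcases le_total i m with him | hmi
  · rw [concatPath_of_le him]
    obtain ⟨hlower₁, hupper₁⟩ := isQuasigeodesic_dist_iff.1 hγ i m him le_rfl
    obtain ⟨hlower₂, hupper₂⟩ := isQuasigeodesic_dist_iff.1 hη 0 j j.zero_le (by omega)
    have hcorner := hcorner i him j (by omega)
    have htri := dist_triangle (γ i) (η 0) (η j)
    have him' : (i : ℝ) ≤ m := Nat.cast_le.2 him
    rw [h] at hlower₁ hupper₁
    push_cast at hlower₂ hupper₂ ⊢
    constructor
    · have hinv : 1 / L * (2 * ε) ≤ 2 * ε :=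
        mul_le_of_le_one_left (by linarith) ((div_le_one (by linarith)).2 hL)
      calc 1 / (K * L) * ((m : ℝ) + j - i) - 2 * ε
          ≤ 1 / (K * L) * ((m : ℝ) + j - i) - 1 / L * (2 * ε) := by linarith
        _ = 1 / L * (1 / K * (m - i) + 1 / K * (j - 0) - 2 * ε) := by field_simp; ring
        _ ≤ 1 / L * (L * dist (γ i) (η j)) := by gcongr; linarith
        _ = dist (γ i) (η j) := by field_simp
    · have hmul : K * ((m : ℝ) + j - i) ≤ K * L * (m + j - i) :=
        mul_le_mul_of_nonneg_right hKL (by linarith [j.cast_nonneg (α := ℝ)])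
      linarith
  · obtain ⟨i, rfl⟩ := Nat.exists_eq_add_of_le hmi
    rw [concatPath_add h]
    simpa using hη' i j (by omega) (by omega)

theorem IsStablePath.exists_dist_le_relaxedStability (hγ : IsStablePath dist f n γ) (hK : 1 ≤ K)
    (hη : IsQuasigeodesic dist K ε m η) (h0 : ∃ i ≤ n, dist (η 0) (γ i) ≤ r)
    (hm : ∃ i ≤ n, dist (η m) (γ i) ≤ r) :
    ∀ j ≤ m, ∃ i ≤ n, dist (η j) (γ i) ≤ relaxedStability f r K ε := by
  intro j hj
  obtain ⟨s, hs, h0s⟩ := h0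
  obtain ⟨t, ht, hmt⟩ := hm
  have hr : 0 ≤ r := dist_nonneg.trans h0s
  let η' : ℕ → α := fun i => if i = 0 then γ s else if i = m then γ t else η i
  have hclose (i : ℕ) : dist (η i) (η' i) ≤ r := by
    by_cases hi0 : i = 0
    · simpa [η', hi0] using h0s
    by_cases him : i = m
    · simpa [η', hi0, him] using if_neg (him ▸ hi0) ▸ hmt
    · simpa [η', hi0, him] using hr
  have hend : ∃ i ≤ n, η' m = γ i := by
    by_cases hm0 : m = 0
    · exact ⟨s, hs, if_pos hm0⟩
    · exact ⟨t, ht, by simp [η', hm0]⟩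
  obtain ⟨i, hi, hji⟩ := hγ K (ε + 2 * r) hK (by linarith [hη.nonneg]) m η'
    (hη.of_dist_le fun i _ => hclose i) ⟨s, hs, if_pos rfl⟩ hend j hj
  refine ⟨i, hi, (dist_triangle _ (η' j) _).trans ?_⟩
  rw [relaxedStability]
  linarith [hclose j]

/-- A discrete intermediate value argument: the parameters of points of `γ` near `σ 0, …, σ m` go
from `0` to `t`, so they cross `s`, and they do so in one step of `σ`. -/
lemma IsGeodesic.exists_crossing {E : ℝ} (hσ : IsGeodesic dist m σ)
    (hnear : ∀ k ≤ m, ∃ i ≤ n, dist (σ k) (γ i) ≤ E) (hσ0 : σ 0 = γ 0)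
    {s t : ℕ} (hst : s ≤ t) (ht : t ≤ n) (hσm : σ m = γ t) :
    ∃ i ≤ s, ∃ j ≥ s, j ≤ n ∧ dist (γ i) (γ j) ≤ 2 * E + 1 ∧
      ∃ k ≤ m, dist (σ k) (γ i) ≤ E := by
  classical
  have hE : 0 ≤ E := by
    obtain ⟨i, -, hi⟩ := hnear 0 m.zero_le
    exact dist_nonneg.trans hi
  have hbeyond_m : ∃ j ≥ s, j ≤ n ∧ dist (σ m) (γ j) ≤ E := ⟨t, hst, ht, by rwa [hσm, dist_self]⟩
  have hbeyond : ∃ k, ∃ j ≥ s, j ≤ n ∧ dist (σ k) (γ j) ≤ E := ⟨m, hbeyond_m⟩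
  obtain ⟨k, hk⟩ : ∃ k, k = Nat.find hbeyond := ⟨_, rfl⟩
  have hkm : k ≤ m := hk ▸ Nat.find_min' hbeyond hbeyond_m
  obtain ⟨j, hsj, hjn, hkj⟩ := hk ▸ Nat.find_spec hbeyond
  obtain ⟨i, his, hki⟩ : ∃ i ≤ s, dist (σ (k - 1)) (γ i) ≤ E := by
    rcases k.eq_zero_or_pos with rfl | hkpos
    · exact ⟨0, s.zero_le, by rwa [hσ0, dist_self]⟩
    · obtain ⟨i, hin, hki⟩ := hnear (k - 1) (by omega)
      refine ⟨i, ?_, hki⟩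
      by_contra his
      exact Nat.find_min hbeyond (m := k - 1) (by omega) ⟨i, by omega, hin, hki⟩
  have hstep : dist (σ (k - 1)) (σ k) ≤ 1 := by
    have hcast : (k : ℝ) ≤ (k - 1 : ℕ) + 1 := by exact_mod_cast (by omega : k ≤ k - 1 + 1)
    rw [isGeodesic_dist_iff.1 hσ (k - 1) k (Nat.sub_le k 1) hkm]
    linarith
  refine ⟨i, his, j, hsj, hjn, ?_, k - 1, by omega, hki⟩
  have htri := dist_triangle4 (γ i) (σ (k - 1)) (σ k) (γ j)
  rw [dist_comm (γ i) (σ _)] at htri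
  linarith

theorem IsStablePath.exists_dist_geodesic_le (hK : 1 ≤ K) (hγ : IsQuasigeodesic dist K ε n γ)
    (hstable : IsStablePath dist f n γ) (hσ : IsGeodesic dist m σ) (hσ0 : σ 0 = γ 0)
    {s t : ℕ} (hst : s ≤ t) (ht : t ≤ n) (hσm : σ m = γ t) :
    ∃ k ≤ m, dist (γ s) (σ k) ≤ K * (K * (2 * f 1 0 + 1 + ε)) + ε + f 1 0 := by
  have hnear : ∀ k ≤ m, ∃ i ≤ n, dist (σ k) (γ i) ≤ f 1 0 :=
    hstable 1 0 le_rfl le_rfl m σ (isGeodesic_iff_isQuasigeodesic.1 hσ)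
      ⟨0, n.zero_le, hσ0⟩ ⟨t, ht, hσm⟩
  obtain ⟨i, his, j, hsj, hjn, hij, k, hkm, hki⟩ := hσ.exists_crossing hnear hσ0 hst ht hσm
  have hjump : (j : ℝ) - i ≤ K * (2 * f 1 0 + 1 + ε) := by
    have hlower := (isQuasigeodesic_dist_iff.1 hγ i j (his.trans hsj) hjn).1
    rw [← div_le_iff₀' (by linarith), ← one_div_mul_eq_div]
    linarith
  have hsi : dist (γ i) (γ s) ≤ K * (K * (2 * f 1 0 + 1 + ε)) + ε := by
    have hsj' : (s : ℝ) ≤ j := Nat.cast_le.2 hsj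
    calc dist (γ i) (γ s) ≤ K * ((s : ℝ) - i) + ε :=
          (isQuasigeodesic_dist_iff.1 hγ i s his (hst.trans ht)).2
      _ ≤ K * (K * (2 * f 1 0 + 1 + ε)) + ε := by gcongr; linarith
  refine ⟨k, hkm, (dist_triangle_left _ _ (γ i)).trans ?_⟩
  rw [dist_comm (γ i) (σ k)]
  linarith

end MetricPaths

/-- Any two points are joined by a geodesic with integer parameters, as in the vertex set of a
connected graph. All distances are then integers. -/
def IsDiscretelyGeodesic {α : Type*} (d : α → α → ℝ) : Prop :=
  ∀ x y, ∃ (n : ℕ) (γ : ℕ → α), IsGeodesic d n γ ∧ γ 0 = x ∧ γ n = y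

/-- Any two points of `A` are joined inside `A` by an `f`-stable `(K, ε)`-quasigeodesic. This is
the intrinsic form, for subsets, of the notion of a stable subgroup. -/
def IsStableSubset {α : Type*} (d : α → α → ℝ) (K ε : ℝ) (f : ℝ → ℝ → ℝ) (A : Set α) : Prop :=
  ∀ a ∈ A, ∀ b ∈ A, ∃ (n : ℕ) (γ : ℕ → α), IsQuasigeodesic d K ε n γ ∧ IsStablePath d f n γ ∧
    (∀ i ≤ n, γ i ∈ A) ∧ γ 0 = a ∧ γ n = b

lemma IsStableSubset.mono {α : Type*} {d : α → α → ℝ} {K K' ε ε' : ℝ} {f f' : ℝ → ℝ → ℝ}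
    {A : Set α} (hA : IsStableSubset d K ε f A) (hK : 0 < K) (hKK' : K ≤ K') (hεε' : ε ≤ ε')
    (hff' : f ≤ f') : IsStableSubset d K' ε' f' A := by
  intro a ha b hb
  obtain ⟨n, γ, hγ, hstable, hγA, hends⟩ := hA a ha b hb
  exact ⟨n, γ, hγ.mono hK hKK' hεε', hstable.mono hff', hγA, hends⟩

section StableSubsets

variable {α : Type*} [PseudoMetricSpace α] {K ε r D : ℝ} {f : ℝ → ℝ → ℝ} {A B C : Set α}
  {m n : ℕ} {γ η : ℕ → α} {p x : α}

lemma exists_isMinOn_dist (hα : IsDiscretelyGeodesic (dist : α → α → ℝ)) (hA : A.Nonempty)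
    (x : α) : ∃ p ∈ A, IsMinOn (dist x) A p := by
  have dist_eq_natCast (y : α) : ∃ k : ℕ, dist x y = k := by
    obtain ⟨n, γ, hγ, rfl, rfl⟩ := hα x y
    exact ⟨n, by simp [isGeodesic_dist_iff.1 hγ 0 n n.zero_le le_rfl]⟩
  choose N hN using dist_eq_natCast
  have : Nonempty A := hA.to_subtype
  refine ⟨_, (Function.argmin fun y : A => N y).2, fun y hy => ?_⟩
  simpa [hN] using Function.argmin_le (fun y : A => N y) ⟨y, hy⟩

theorem exists_forall_dist_add_dist_le (hα : IsDiscretelyGeodesic (dist : α → α → ℝ))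
    (hK : 1 ≤ K) (ε : ℝ) (f : ℝ → ℝ → ℝ) :
    ∃ C, ∀ (n : ℕ) (γ : ℕ → α), IsQuasigeodesic dist K ε n γ → IsStablePath dist f n γ →
      ∀ s t, s ≤ t → t ≤ n →
        dist (γ 0) (γ s) + dist (γ s) (γ t) ≤ dist (γ 0) (γ t) + C := by
  refine ⟨2 * (K * (K * (2 * f 1 0 + 1 + ε)) + ε + f 1 0), fun n γ hγ hstable s t hst ht => ?_⟩
  obtain ⟨m, σ, hσ, hσ0, hσm⟩ := hα (γ 0) (γ t)
  obtain ⟨k, hkm, hk⟩ := hstable.exists_dist_geodesic_le hK hγ hσ hσ0 hst ht hσm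
  have hσ' := isGeodesic_dist_iff.1 hσ
  have hadd : dist (γ 0) (σ k) + dist (σ k) (γ t) = dist (γ 0) (γ t) := by
    rw [← hσ0, ← hσm, hσ' 0 k k.zero_le hkm, hσ' k m hkm le_rfl, hσ' 0 m m.zero_le le_rfl]
    ring
  have h0s := dist_triangle_right (γ 0) (γ s) (σ k)
  have hst := dist_triangle (γ s) (σ k) (γ t)
  linarith

theorem IsStableSubset.exists_dist_le (hA : IsStableSubset dist K ε f A) {K' ε' : ℝ}
    (hK' : 1 ≤ K') (hη : IsQuasigeodesic dist K' ε' m η) (h0 : ∃ a ∈ A, dist (η 0) a ≤ r)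
    (hm : ∃ a ∈ A, dist (η m) a ≤ r) :
    ∀ j ≤ m, ∃ a ∈ A, dist (η j) a ≤ relaxedStability f r K' ε' := by
  intro j hj
  obtain ⟨a, ha, h0a⟩ := h0
  obtain ⟨b, hb, hmb⟩ := hm
  obtain ⟨n, γ, -, hstable, hγA, rfl, rfl⟩ := hA a ha b hb
  obtain ⟨i, hi, hji⟩ := hstable.exists_dist_le_relaxedStability hK' hη
    ⟨0, n.zero_le, h0a⟩ ⟨n, le_rfl, hmb⟩ j hj
  exact ⟨γ i, hγA i hi, hji⟩

lemma IsGeodesic.dist_add_dist_le_of_isMinOn (hγ : IsGeodesic dist m γ)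
    (hmin : IsMinOn (dist (γ 0)) A (γ m)) {i : ℕ} (hi : i ≤ m) {y : α} (hy : y ∈ A) :
    dist (γ i) (γ m) + dist (γ m) y ≤ 3 * dist (γ i) y := by
  have hγ' := isGeodesic_dist_iff.1 hγ
  have hadd : dist (γ 0) (γ i) + dist (γ i) (γ m) = dist (γ 0) (γ m) := by
    rw [hγ' 0 i i.zero_le hi, hγ' i m hi le_rfl, hγ' 0 m m.zero_le le_rfl]
    ring
  have hproj : dist (γ i) (γ m) ≤ dist (γ i) y := by
    have htri := dist_triangle (γ 0) (γ i) y
    linarith [isMinOn_iff.1 hmin y hy]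
  have htri := dist_triangle_left (γ m) y (γ i)
  linarith

theorem IsStableSubset.exists_isQuasigeodesic_through (hα : IsDiscretelyGeodesic (dist : α → α → ℝ))
    (hK : 1 ≤ K) (hA : IsStableSubset dist K ε f A) (hp : p ∈ A) (hmin : IsMinOn (dist x) A p)
    {y : α} (hy : y ∈ A) :
    ∃ (m : ℕ) (η : ℕ → α), IsQuasigeodesic dist (K * 3) (2 * ε) m η ∧ η 0 = x ∧ η m = y ∧
      ∃ k ≤ m, η k = p := by
  obtain ⟨m, σ, hσ, rfl, rfl⟩ := hα x p
  obtain ⟨n, γ, hγ, -, hγA, hγ0, rfl⟩ := hA _ hp y hy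
  have hσ' : IsQuasigeodesic dist K ε m σ :=
    (isGeodesic_iff_isQuasigeodesic.1 hσ).mono one_pos hK hγ.nonneg
  refine ⟨m + n, concatPath m σ γ, hσ'.concatPath hK (by norm_num) hγ hγ0.symm ?_,
    concatPath_of_le m.zero_le, concatPath_add hγ0.symm n, m, m.le_add_right n,
    concatPath_of_le le_rfl⟩
  intro i hi j hj
  rw [hγ0]
  exact hσ.dist_add_dist_le_of_isMinOn hmin hi (hγA j hj)

/-- The coarse center of three sets: the projection to `C` of a point where `A` and `B` are close
lies close to both. -/
theorem IsStableSubset.exists_mem_near_both (hα : IsDiscretelyGeodesic (dist : α → α → ℝ))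
    (hK : 1 ≤ K) (hA : IsStableSubset dist K ε f A) (hB : IsStableSubset dist K ε f B)
    (hC : IsStableSubset dist K ε f C) (hAB : ∃ a ∈ A, ∃ b ∈ B, dist a b ≤ D)
    (hCA : ∃ c ∈ C, ∃ a ∈ A, dist c a ≤ D) (hCB : ∃ c ∈ C, ∃ b ∈ B, dist c b ≤ D) :
    ∃ z ∈ C, (∃ a ∈ A, dist z a ≤ relaxedStability f D (K * 3) (2 * ε)) ∧
      ∃ b ∈ B, dist z b ≤ relaxedStability f D (K * 3) (2 * ε) := by
  obtain ⟨x, hxA, b, hb, hxb⟩ := hAB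
  obtain ⟨z, hzC, hmin⟩ := exists_isMinOn_dist hα ⟨_, hCA.choose_spec.1⟩ x
  have near (X : Set α) (hX : IsStableSubset dist K ε f X) (hx : ∃ a ∈ X, dist x a ≤ D)
      (hCX : ∃ c ∈ C, ∃ a ∈ X, dist c a ≤ D) :
      ∃ a ∈ X, dist z a ≤ relaxedStability f D (K * 3) (2 * ε) := by
    obtain ⟨c, hc, hca⟩ := hCX
    obtain ⟨m, η, hη, rfl, rfl, k, hkm, rfl⟩ :=
      hC.exists_isQuasigeodesic_through hα hK hzC hmin hc
    exact hX.exists_dist_le (by linarith) hη hx hca k hkm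
  have hD : 0 ≤ D := dist_nonneg.trans hxb
  exact ⟨z, hzC, near A hA ⟨x, hxA, by rwa [dist_self]⟩ hCA, near B hB ⟨b, hb, hxb⟩ hCB⟩

theorem IsStablePath.exists_dist_isMinOn_le (hα : IsDiscretelyGeodesic (dist : α → α → ℝ))
    (hK : 1 ≤ K) (hA : IsStableSubset dist K ε f A) (hγ : IsStablePath dist f n γ)
    (hp : p ∈ A) (hmin : IsMinOn (dist (γ 0)) A p) (hn : ∃ a ∈ A, dist (γ n) a ≤ r) :
    ∃ s ≤ n, dist p (γ s) ≤ relaxedStability f r (K * 3) (2 * ε) := by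
  obtain ⟨a, ha, hna⟩ := hn
  obtain ⟨m, η, hη, hη0, rfl, k, hkm, rfl⟩ := hA.exists_isQuasigeodesic_through hα hK hp hmin ha
  exact hγ.exists_dist_le_relaxedStability (by linarith) hη
    ⟨0, n.zero_le, by simpa [hη0] using dist_nonneg.trans hna⟩
    ⟨n, le_rfl, by rwa [dist_comm]⟩ k hkm

theorem exists_forall_dist_isMinOn_le (hα : IsDiscretelyGeodesic (dist : α → α → ℝ))
    (hK : 1 ≤ K) (ε : ℝ) (f : ℝ → ℝ → ℝ) (r : ℝ) :
    ∃ R, ∀ (A B : Set α) (p q : α) (n : ℕ) (γ : ℕ → α),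
      IsStableSubset dist K ε f A → IsStableSubset dist K ε f B →
      IsQuasigeodesic dist K ε n γ → IsStablePath dist f n γ →
      p ∈ A → q ∈ B → IsMinOn (dist (γ 0)) A p → IsMinOn (dist (γ 0)) B q →
      dist (γ 0) q ≤ dist (γ 0) p →
      (∃ a ∈ A, dist (γ n) a ≤ r) → (∃ b ∈ B, dist (γ n) b ≤ r) →
      ∃ b ∈ B, dist p b ≤ R := by
  obtain ⟨M, hM⟩ := exists_forall_dist_add_dist_le hα hK ε f
  obtain ⟨E, hE⟩ : ∃ E, E = relaxedStability f r (K * 3) (2 * ε) := ⟨_, rfl⟩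
  refine ⟨max (E + relaxedStability f (max E r) K ε) (4 * E + M), ?_⟩
  intro A B p q n γ hA hB hγ hstable hp hq hpmin hqmin hqp hnA hnB
  obtain ⟨s, hsn, hps⟩ := hstable.exists_dist_isMinOn_le hα hK hA hp hpmin hnA
  obtain ⟨t, htn, hqt⟩ := hstable.exists_dist_isMinOn_le hα hK hB hq hqmin hnB
  rw [← hE] at hps hqt
  rcases le_total t s with hts | hst
  -- `γ s` lies on the part of `γ` from `γ t` to `γ n`, both of which are close to `B`.
  · obtain ⟨k, rfl⟩ := Nat.exists_eq_add_of_le hts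
    obtain ⟨l, rfl⟩ := Nat.exists_eq_add_of_le htn
    obtain ⟨b, hb, hnb⟩ := hnB
    obtain ⟨c, hc, hsc⟩ := hB.exists_dist_le hK hγ.comp_add_left
      ⟨q, hq, (dist_comm _ _).trans_le (hqt.trans (le_max_left E r))⟩
      ⟨b, hb, hnb.trans (le_max_right E r)⟩ k (by omega)
    refine ⟨c, hc, le_max_of_le_left ((dist_triangle p (γ (t + k)) c).trans ?_)⟩
    gcongr
  -- As `q` is no farther from `γ 0` than `p`, additivity of distances forces `γ s` close to `γ t`.
  · refine ⟨q, hq, le_max_of_le_right ?_⟩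
    have hadd := hM n γ hγ hstable s t hst htn
    have hwt := dist_triangle (γ 0) q (γ t)
    have hwp := dist_triangle_right (γ 0) p (γ s)
    have hpq := dist_triangle4 p (γ s) (γ t) q
    rw [dist_comm (γ t) q] at hpq
    linarith

theorem exists_center_of_finite_of_isStableSubset [Nonempty α]
    (hα : IsDiscretelyGeodesic (dist : α → α → ℝ)) (hK : 1 ≤ K) (ε : ℝ) (f : ℝ → ℝ → ℝ) (D : ℝ) :
    ∃ R, ∀ 𝒞 : Set (Set α), 𝒞.Finite → (∀ A ∈ 𝒞, IsStableSubset dist K ε f A) →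
      (∀ A ∈ 𝒞, ∀ B ∈ 𝒞, ∃ a ∈ A, ∃ b ∈ B, dist a b ≤ D) →
      ∃ x, ∀ A ∈ 𝒞, ∃ a ∈ A, dist x a ≤ R := by
  obtain ⟨R, hR⟩ := exists_forall_dist_isMinOn_le hα hK ε f
    (relaxedStability f D (K * 3) (2 * ε))
  refine ⟨R, fun 𝒞 hfin hstable hclose => ?_⟩
  rcases 𝒞.eq_empty_or_nonempty with rfl | hne
  · simp
  have hnonempty (A) (hA : A ∈ 𝒞) : A.Nonempty := ⟨_, (hclose A hA A hA).choose_spec.1⟩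
  obtain ⟨Y, hY⟩ := id hne
  obtain ⟨w, hw⟩ := hnonempty Y hY
  have hproj (A : 𝒞) : ∃ p ∈ A.1, IsMinOn (dist w) A p :=
    exists_isMinOn_dist hα (hnonempty A A.2) w
  choose p hp hmin using hproj
  have := hfin.to_subtype
  have := hne.to_subtype
  obtain ⟨A, hfarthest⟩ := Finite.exists_max fun A => dist w (p A)
  refine ⟨p A, fun B hB => ?_⟩
  obtain ⟨z, hzY, hzA, hzB⟩ := IsStableSubset.exists_mem_near_both hα hK (hstable A A.2)
    (hstable B hB) (hstable Y hY) (hclose A A.2 B hB) (hclose Y hY A A.2) (hclose Y hY B hB)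
  obtain ⟨n, γ, hγ, hγstable, -, rfl, rfl⟩ := hstable Y hY w hw z hzY
  exact hR A B (p A) (p ⟨B, hB⟩) n γ (hstable A A.2) (hstable B hB) hγ hγstable (hp A)
    (hp ⟨B, hB⟩) (hmin A) (hmin ⟨B, hB⟩) (hfarthest ⟨B, hB⟩) hzA hzB

end StableSubsets

section WordMetric

variable {G : Type*} [Group G] {S : Set G}

lemma wordLength_prod_le {l : List G} (hl : ∀ x ∈ l, x ∈ S ∨ x⁻¹ ∈ S) :
    wordLength S l.prod ≤ l.length :=
  Nat.sInf_le ⟨l, rfl, hl, rfl⟩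

lemma exists_list_length_eq_wordLength (hS : Subgroup.closure S = ⊤) (g : G) :
    ∃ l : List G, l.length = wordLength S g ∧ (∀ x ∈ l, x ∈ S ∨ x⁻¹ ∈ S) ∧ l.prod = g := by
  refine Nat.sInf_mem (s := {n | ∃ l : List G, l.length = n ∧ _ ∧ l.prod = g}) ?_
  have hg : g ∈ Submonoid.closure (S ∪ S⁻¹) := by
    rw [← Subgroup.closure_toSubmonoid, hS]
    trivial
  obtain ⟨l, hl, hprod⟩ := Submonoid.exists_list_of_mem_closure hg
  exact ⟨l.length, l, rfl, hl, hprod⟩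

lemma wordLength_one (S : Set G) : wordLength S 1 = 0 :=
  Nat.le_zero.1 (wordLength_prod_le (l := []) (by simp))

lemma wordLength_mul_le (hS : Subgroup.closure S = ⊤) (g h : G) :
    wordLength S (g * h) ≤ wordLength S g + wordLength S h := by
  obtain ⟨l, hl, hlS, rfl⟩ := exists_list_length_eq_wordLength hS g
  obtain ⟨k, hk, hkS, rfl⟩ := exists_list_length_eq_wordLength hS h
  rw [← hl, ← hk, ← List.prod_append, ← List.length_append]
  exact wordLength_prod_le fun x hx => (List.mem_append.1 hx).elim (hlS x) (hkS x)

lemma wordLength_inv_le (hS : Subgroup.closure S = ⊤) (g : G) :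
    wordLength S g⁻¹ ≤ wordLength S g := by
  obtain ⟨l, hl, hlS, rfl⟩ := exists_list_length_eq_wordLength hS g
  rw [← hl, List.prod_inv_reverse]
  refine (wordLength_prod_le fun x hx => ?_).trans_eq (by simp)
  obtain ⟨y, hy, rfl⟩ := List.mem_map.1 (List.mem_reverse.1 hx)
  simpa [or_comm] using hlS y hy

lemma wordLength_inv (hS : Subgroup.closure S = ⊤) (g : G) :
    wordLength S g⁻¹ = wordLength S g :=
  (wordLength_inv_le hS g).antisymm (by simpa using wordLength_inv_le hS g⁻¹)

lemma wordDist_mul_left (S : Set G) (g x y : G) :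
    wordDist S (g * x) (g * y) = wordDist S x y := by
  simp [wordDist, mul_assoc]

/-- The word metric of a generating set, as a pseudometric space structure on the group. -/
noncomputable abbrev wordPseudoMetricSpace (S : Set G) (hS : Subgroup.closure S = ⊤) :
    PseudoMetricSpace G where
  dist := wordDist S
  dist_self g := by simp [wordDist, wordLength_one]
  dist_comm g h := by
    rw [wordDist, wordDist, ← wordLength_inv hS, mul_inv_rev, inv_inv]
  dist_triangle g h k := by
    have hmul := wordLength_mul_le hS (g⁻¹ * h) (h⁻¹ * k)
    rw [mul_assoc, mul_inv_cancel_left] at hmul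
    simp only [wordDist]
    exact_mod_cast hmul

theorem isDiscretelyGeodesic_wordDist (hS : Subgroup.closure S = ⊤) :
    IsDiscretelyGeodesic (wordDist S) := by
  intro x y
  obtain ⟨l, hl, hlS, hprod⟩ := exists_list_length_eq_wordLength hS (x⁻¹ * y)
  let _ := wordPseudoMetricSpace S hS
  have hstep : ∀ i < l.length,
      wordDist S (x * (l.take i).prod) (x * (l.take (i + 1)).prod) ≤ 1 := by
    intro i hi
    have hletter : wordLength S l[i] ≤ 1 := by
      simpa using wordLength_prod_le (l := [l[i]]) (by simpa using hlS _ (l.getElem_mem hi))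
    rw [wordDist_mul_left, List.prod_take_succ l i hi, wordDist, inv_mul_cancel_left]
    exact_mod_cast hletter
  have hend : (l.length : ℝ) ≤ dist x y := (congrArg Nat.cast hl).le
  exact ⟨l.length, fun i => x * (l.take i).prod,
    isGeodesic_of_dist_succ_le hstep (by simpa [hprod] using hend), by simp, by simp [hprod]⟩

lemma finite_setOf_wordLength_le (hSfin : S.Finite) (hS : Subgroup.closure S = ⊤) (n : ℕ) :
    {g : G | wordLength S g ≤ n}.Finite := by
  have := (hSfin.union hSfin.inv).to_subtype
  refine ((List.finite_length_le ↥(S ∪ S⁻¹) n).image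
    fun l => (l.map Subtype.val).prod).subset fun g hg => ?_
  obtain ⟨l, hl, hlS, hprod⟩ := exists_list_length_eq_wordLength hS g
  lift l to List ↥(S ∪ S⁻¹) using hlS
  exact ⟨l, by simpa [← hl] using hg, hprod⟩

lemma exists_wordDist_lt_of_setDist_lt {A B : Set G} {r : ℝ} (hA : A.Nonempty)
    (hB : B.Nonempty) (h : setDist S A B < r) : ∃ a ∈ A, ∃ b ∈ B, wordDist S a b < r := by
  obtain ⟨a₀, ha₀⟩ := hA
  obtain ⟨b₀, hb₀⟩ := hB
  obtain ⟨_, ⟨a, ha, b, hb, rfl⟩, hab⟩ :=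
    exists_lt_of_csInf_lt (s := {r | ∃ a ∈ A, ∃ b ∈ B, r = wordDist S a b})
      ⟨_, a₀, ha₀, b₀, hb₀, rfl⟩ h
  exact ⟨a, ha, b, hb, hab⟩

theorem exists_forall_encard_cosets_le {ι : Type*} [Finite ι] (hSfin : S.Finite)
    (hS : Subgroup.closure S = ⊤) (H : ι → Subgroup G) (R : ℝ) :
    ∃ N : ℕ, ∀ (x : G) (𝒞 : Set (Set G)), (∀ A ∈ 𝒞, ∃ i, ∃ g : G, A = g • (H i : Set G)) →
      (∀ A ∈ 𝒞, ∃ a ∈ A, wordDist S x a ≤ R) → 𝒞.encard ≤ N := by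
  have hfin : (Set.univ ×ˢ {g : G | wordLength S g ≤ ⌊R⌋₊} : Set (ι × G)).Finite :=
    Set.finite_univ.prod (finite_setOf_wordLength_le hSfin hS _)
  obtain ⟨N, hN⟩ := ENat.ne_top_iff_exists.1 (Set.encard_ne_top_iff.2 hfin)
  refine ⟨N, fun x 𝒞 hcoset hmeet => ?_⟩
  rw [hN]
  refine (Set.encard_le_encard fun A hA => ?_).trans
    (Set.encard_image_le (fun p : ι × G => (x * p.2) • (H p.1 : Set G)) _)
  obtain ⟨i, g, rfl⟩ := hcoset A hA
  obtain ⟨a, ha, hxa⟩ := hmeet _ hA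
  refine ⟨(i, x⁻¹ * a), ⟨trivial, Nat.le_floor hxa⟩, ?_⟩
  have hcoset_eq : (x * (x⁻¹ * a)) • (H i : Set G) = g • (H i : Set G) := by
    rw [mul_inv_cancel_left, eq_comm, leftCoset_eq_iff]
    exact (mem_leftCoset_iff g).1 ha
  exact hcoset_eq

theorem exists_center_of_forall_finite_subset {ι : Type*} [Finite ι] (hSfin : S.Finite)
    (hS : Subgroup.closure S = ⊤) {H : ι → Subgroup G} {R : ℝ} {𝒞 : Set (Set G)}
    (hcoset : ∀ A ∈ 𝒞, ∃ i, ∃ g : G, A = g • (H i : Set G))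
    (hcenter : ∀ 𝒟 ⊆ 𝒞, 𝒟.Finite → ∃ x, ∀ A ∈ 𝒟, ∃ a ∈ A, wordDist S x a ≤ R) :
    ∃ x, ∀ A ∈ 𝒞, ∃ a ∈ A, wordDist S x a ≤ R := by
  refine hcenter 𝒞 subset_rfl (by_contra fun hinf => ?_)
  obtain ⟨N, hN⟩ := exists_forall_encard_cosets_le hSfin hS H R
  obtain ⟨𝒟, hsub, hcard⟩ := Set.exists_subset_encard_eq (s := 𝒞) (k := (N + 1 : ℕ))
    (by simp [Set.Infinite.encard_eq hinf])
  obtain ⟨x, hx⟩ := hcenter 𝒟 hsub (Set.finite_of_encard_eq_coe hcard)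
  have hle := hN x 𝒟 (fun A hA => hcoset A (hsub hA)) hx
  rw [hcard, Nat.cast_le] at hle
  omega

end WordMetric

section StableSubgroups

variable {G : Type*} [Group G] {S : Set G} {K ε : ℝ} {f : ℝ → ℝ → ℝ}

lemma IsQuasigeodesic.mul_left {n : ℕ} {γ : ℕ → G} (hγ : IsQuasigeodesic (wordDist S) K ε n γ)
    (g : G) : IsQuasigeodesic (wordDist S) K ε n (fun i => g * γ i) := by
  simpa only [IsQuasigeodesic, wordDist_mul_left] using hγ

lemma IsStablePath.mul_left {n : ℕ} {γ : ℕ → G} (hγ : IsStablePath (wordDist S) f n γ)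
    (g : G) : IsStablePath (wordDist S) f n (fun i => g * γ i) := by
  intro K ε hK hε m η hη h0 hm j hj
  obtain ⟨i, hi, hji⟩ := hγ K ε hK hε m _ (hη.mul_left g⁻¹)
    (by simpa only [inv_mul_eq_iff_eq_mul] using h0)
    (by simpa only [inv_mul_eq_iff_eq_mul] using hm) j hj
  refine ⟨i, hi, ?_⟩
  rwa [← wordDist_mul_left S g, mul_inv_cancel_left] at hji

lemma IsStableSubset.smul {A : Set G} (hA : IsStableSubset (wordDist S) K ε f A) (g : G) :
    IsStableSubset (wordDist S) K ε f (g • A) := by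
  rintro _ ⟨a, ha, rfl⟩ _ ⟨b, hb, rfl⟩
  obtain ⟨n, γ, hγ, hstable, hγA, rfl, rfl⟩ := hA a ha b hb
  exact ⟨n, fun i => g * γ i, hγ.mul_left g, hstable.mul_left g,
    fun i hi => Set.smul_mem_smul_set (hγA i hi), rfl, rfl⟩

lemma IsStableSubgroupWith.exists_isStableSubset {H : Subgroup G}
    (hH : IsStableSubgroupWith S H f) :
    ∃ K ε, 1 ≤ K ∧ IsStableSubset (wordDist S) K ε f (H : Set G) := by
  obtain ⟨T, -, hT, ⟨K, ε, hK, -, hqi⟩, hstable⟩ := hH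
  refine ⟨K, ε, hK, fun a ha b hb => ?_⟩
  obtain ⟨n, γ, hγ, h0, hn⟩ := isDiscretelyGeodesic_wordDist hT ⟨a, ha⟩ ⟨b, hb⟩
  refine ⟨n, fun i => γ i, fun i j hi hj => ?_, (hstable n γ hγ).2, fun i _ => (γ i).2,
    congrArg Subtype.val h0, congrArg Subtype.val hn⟩
  simpa only [hγ i j hi hj] using hqi (γ i) (γ j)

theorem exists_forall_isStableSubset_smul {ι : Type*} [Finite ι] {H : ι → Subgroup G}
    (hH : ∀ i, IsStableSubgroup S (H i)) :
    ∃ K ε f, 1 ≤ K ∧ ∀ i (g : G), IsStableSubset (wordDist S) K ε f (g • (H i : Set G)) := by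
  choose f hf using hH
  choose K ε hK hstable using fun i => (hf i).exists_isStableSubset
  obtain ⟨K', hK'⟩ := Finite.exists_le K
  obtain ⟨ε', hε'⟩ := Finite.exists_le ε
  obtain ⟨f', hf'⟩ := Finite.exists_le f
  refine ⟨max 1 K', ε', f', le_max_left 1 K', fun i g => ?_⟩
  exact ((hstable i).mono (one_pos.trans_le (hK i)) (le_max_of_le_right (hK' i)) (hε' i)
    (hf' i)).smul g

end StableSubgroups

/-- **Coarse centers.** For each `D ≥ 0` there is `R ≥ 0` such that any collection of
pairwise `D`-close cosets of subgroups in the family admits a point whose `R`-ball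
meets every coset of the collection. -/
theorem coarse_centers_of_stable {G : Type*} [Group G] (S : Set G) (hSfin : S.Finite)
    (hSgen : Subgroup.closure S = ⊤) (l : ℕ) (H : Fin l → Subgroup G)
    (hstable : ∀ i, IsStableSubgroup S (H i)) :
    ∀ D : ℝ, 0 ≤ D → ∃ R : ℝ, 0 ≤ R ∧
      ∀ 𝒞 : Set (Set G), (∀ A ∈ 𝒞, ∃ (i : Fin l) (g : G), A = g • (H i : Set G)) →
        (∀ A ∈ 𝒞, ∀ B ∈ 𝒞, setDist S A B ≤ D) →
        ∃ x : G, ∀ A ∈ 𝒞, ∃ a ∈ A, wordDist S x a ≤ R := by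
  rintro D -
  obtain ⟨K, ε, f, hK, hsubset⟩ := exists_forall_isStableSubset_smul hstable
  let _ := wordPseudoMetricSpace S hSgen
  obtain ⟨R, hR⟩ := exists_center_of_finite_of_isStableSubset
    (isDiscretelyGeodesic_wordDist hSgen) hK ε f (D + 1)
  refine ⟨max 0 R, le_max_left 0 R, fun 𝒞 hcoset hdist => ?_⟩
  have hstableCoset (A) (hA : A ∈ 𝒞) : IsStableSubset (wordDist S) K ε f A := by
    obtain ⟨i, g, rfl⟩ := hcoset A hA
    exact hsubset i g
  have hnonempty (A) (hA : A ∈ 𝒞) : A.Nonempty := by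
    obtain ⟨i, g, rfl⟩ := hcoset A hA
    exact (OneMemClass.coe_nonempty (H i)).smul_set
  have hclose (A) (hA : A ∈ 𝒞) (B) (hB : B ∈ 𝒞) : ∃ a ∈ A, ∃ b ∈ B, wordDist S a b ≤ D + 1 := by
    obtain ⟨a, ha, b, hb, hab⟩ := exists_wordDist_lt_of_setDist_lt (hnonempty A hA)
      (hnonempty B hB) ((hdist A hA B hB).trans_lt (lt_add_one D))
    exact ⟨a, ha, b, hb, hab.le⟩
  obtain ⟨x, hx⟩ := exists_center_of_forall_finite_subset hSfin hSgen hcoset fun 𝒟 hsub hfin =>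
    hR 𝒟 hfin (fun A hA => hstableCoset A (hsub hA))
      fun A hA B hB => hclose A (hsub hA) B (hsub hB)
  exact ⟨x, fun A hA => (hx A hA).imp fun a ha => ⟨ha.1, ha.2.trans (le_max_right 0 R)⟩⟩
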